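/- arXiv:cs/0610159 — 3 statements merged into one kernel-verified Lean document; each statement's English description precedes it below -/
import Mathlib

section
/- Let f be a Boolean function on m variables of Hamming weight M with M ≤ 2^(m-1). Then the complementary set of f equals the set of those a ∈ F_2^m whose autocorrelation value is 2^m − 4M, i.e. Cset_f = { a ∈ F_2^m : r_f(a) = 2^m − 4M }. -/
/-!
The sign `(-1)^(x + y)` of two bits is `1 - 2x - 2y + 4xy` as an integer. Summing over `v` with
`x = f v` and `y = f (v + a)`, and using that translation preserves the weight of `f`, gives
`r_f(a) = |G| - 4 wt(f) + 4 wt(f · f(· + a))`. So `r_f(a) = |G| - 4 wt(f)` exactly when the product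
`f · f(· + a)` has weight zero, that is, when it vanishes identically.
-/

section Correlation

variable {ι : Type*} [Fintype ι]

theorem hammingNorm_comp_equiv {κ α : Type*} [Fintype κ] [Zero α] [DecidableEq α]
    (f : κ → α) (e : ι ≃ κ) : hammingNorm (f ∘ e) = hammingNorm f :=
  Finset.card_equiv e (by simp)

theorem hammingNorm_eq_card_filter_eq_one (f : ι → ZMod 2) :
    hammingNorm f = (Finset.univ.filter fun i => f i = 1).card := by
  have ne_zero_iff (x : ZMod 2) : x ≠ 0 ↔ x = 1 := by decide +revert
  simp only [hammingNorm, ne_zero_iff]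

theorem sum_val_eq_hammingNorm (f : ι → ZMod 2) : ∑ i, (f i).val = hammingNorm f := by
  have val_eq_ite (x : ZMod 2) : x.val = if x ≠ 0 then 1 else 0 := by decide +revert
  simp only [val_eq_ite, hammingNorm, Finset.card_filter]

theorem neg_one_pow_val_add_val (x y : ZMod 2) :
    (-1 : ℤ) ^ (x.val + y.val) = 1 - 2 * x.val - 2 * y.val + 4 * (x * y).val := by
  decide +revert

theorem sum_neg_one_pow_val_add_val (f g : ι → ZMod 2) :
    ∑ i, (-1 : ℤ) ^ ((f i).val + (g i).val) =
      Fintype.card ι - 2 * hammingNorm f - 2 * hammingNorm g + 4 * hammingNorm (f * g) := by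
  simp only [neg_one_pow_val_add_val, ← sum_val_eq_hammingNorm, Pi.mul_apply,
    Finset.sum_add_distrib, Finset.sum_sub_distrib, ← Finset.mul_sum, Nat.cast_sum,
    Finset.sum_const, Finset.card_univ, nsmul_one]

end Correlation

section Translation

variable {G : Type*}

/-- The complementary set `Cset_f` of a Boolean function `f`: the shifts `a` for which the supports
of `f` and of its translate by `a` are disjoint. The domain may be any additive structure in place
of `F_2^m`. -/
def complementarySet [Add G] (f : G → ZMod 2) : Set G :=
  {a | ∀ v, f v * f (v + a) = 0}

/-- The autocorrelation `r_f(a)` of a Boolean function `f`, comparing `f` with its translate by `a`.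
The bits are lifted to `{0, 1} ⊆ ℕ` by `ZMod.val` to form the exponent. -/
def autocorrelation [Add G] [Fintype G] (f : G → ZMod 2) (a : G) : ℤ :=
  ∑ v, (-1) ^ ((f v).val + (f (v + a)).val)

theorem mem_complementarySet_iff_hammingNorm_eq_zero [Add G] [Fintype G]
    {f : G → ZMod 2} {a : G} :
    a ∈ complementarySet f ↔ hammingNorm (f * fun v => f (v + a)) = 0 :=
  funext_iff.symm.trans hammingNorm_eq_zero.symm

theorem autocorrelation_eq [AddGroup G] [Fintype G] (f : G → ZMod 2) (a : G) :
    autocorrelation f a =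
      Fintype.card G - 4 * hammingNorm f + 4 * hammingNorm (f * fun v => f (v + a)) := by
  have translate_weight : hammingNorm (fun v => f (v + a)) = hammingNorm f :=
    hammingNorm_comp_equiv f (Equiv.addRight a)
  rw [autocorrelation, sum_neg_one_pow_val_add_val, translate_weight]
  ring

theorem cset_eq_autocorrelation_level_set_general [AddGroup G] [Fintype G] (f : G → ZMod 2) :
    complementarySet f = {a | autocorrelation f a = Fintype.card G - 4 * hammingNorm f} := by
  ext a
  rw [mem_complementarySet_iff_hammingNorm_eq_zero, Set.mem_ofPred_eq, autocorrelation_eq]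
  lia

end Translation

/-- For a Boolean function `f` on `m` variables of Hamming weight
`M ≤ 2^(m-1)`, the complementary set of `f` equals the set of `a ∈ F_2^m`
whose autocorrelation value is `2^m − 4M`. -/
theorem cset_eq_autocorrelation_level_set
    (m : ℕ) (f : (Fin m → ZMod 2) → ZMod 2)
    (M : ℕ) (hM : M = (Finset.univ.filter fun v => f v = 1).card)
    (hle : M ≤ 2 ^ (m - 1)) :
    {a : Fin m → ZMod 2 | ∀ v, f v * f (v + a) = 0} =
      {a : Fin m → ZMod 2 |
        (∑ v : Fin m → ZMod 2, (-1 : ℤ) ^ ((f v).val + (f (v + a)).val)) =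
          2 ^ m - 4 * M} := by
  simpa [complementarySet, autocorrelation, hM, hammingNorm_eq_card_filter_eq_one] using
    cset_eq_autocorrelation_level_set_general f
end

section
/- Let y_1, …, y_m ∈ F_2^{2m} be linearly independent over F_2 with pairwise symplectic inner product zero, and write each y_j = (a_j, b_j) with a_j, b_j ∈ F_2^m. Set P_j = (1/2)(I_{2^m} + E_{(a_j,b_j)}). Then P_1, …, P_m are pairwise commuting orthogonal projections, each of rank 2^(m−1), and for every sign pattern (ε_1, …, ε_m) ∈ {+1,−1}^m the product Π_{j=1}^m (1/2)(I_{2^m} + ε_j E_{(a_j,b_j)}) is an orthogonal projection of rank 1. -/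
/-- The Pauli matrix assigned to a pair `(a, b) ∈ F_2 × F_2`:
`I` for `(0,0)`, `X` for `(1,0)`, `Z` for `(0,1)`, `Y` for `(1,1)`,
with `X = [[0,1],[1,0]]`, `Z = [[1,0],[0,−1]]`, `Y = [[0,i],[−i,0]]`. -/
noncomputable def pauliMat (a b : ZMod 2) : Matrix (Fin 2) (Fin 2) ℂ :=
  if a = 0 then
    if b = 0 then 1 else !![1, 0; 0, -1]
  else
    if b = 0 then !![0, 1; 1, 0] else !![0, Complex.I; -Complex.I, 0]

/-- The Heisenberg–Weyl operator `E_{(a,b)} = e_1 ⊗ ⋯ ⊗ e_m ∈ M_{2^m}(ℂ)`. -/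
noncomputable def HW {m : ℕ} (a b : Fin m → ZMod 2) :
    Matrix (Fin m → Fin 2) (Fin m → Fin 2) ℂ :=
  fun x y => ∏ j, pauliMat (a j) (b j) (x j) (y j)

/-! The matrices `E_w` and `E_v` commute or anticommute according to `w ⊙ v`. Linear independence of
the `y_j` and nondegeneracy of `⊙` provide, for each `j`, a `w` with `w ⊙ y_j = 1` and `w ⊙ y_i = 0`
for all `i ≠ j`. Conjugation by `E_w` then negates the product of `E_{y_j}` with any product of
factors `(I + ε_i E_{y_i}) / 2`, `i ≠ j`, so this product is traceless. Hence every new factor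
`(I + ε_j E_{y_j}) / 2` halves the trace, and the trace of a projection is its rank. -/

section Projections

lemma isStarProjection_list_prod {R : Type*} [Semiring R] [StarRing R] {l : List R}
    (hl : ∀ p ∈ l, IsStarProjection p) (hcomm : l.Pairwise Commute) :
    IsStarProjection l.prod := by
  induction l with
  | nil => exact .one R
  | cons p l ih =>
    rw [List.forall_mem_cons] at hl
    rw [List.pairwise_cons] at hcomm
    rw [List.prod_cons]
    exact hl.1.mul (ih hl.2 hcomm.2) (Commute.list_prod_right l p hcomm.1)

/-- The element `(1 + ε A) / 2`. When `A ^ 2 = 1` and `ε = ±1`, it is the projection onto the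
`ε`-eigenspace of `A`. -/
def involutionProj {𝕜 R : Type*} [Field 𝕜] [Ring R] [Algebra 𝕜 R] (ε : 𝕜) (A : R) : R :=
  (1 / 2 : 𝕜) • (1 + ε • A)

variable {𝕜 R : Type*} [Field 𝕜] [Ring R] [Algebra 𝕜 R]

lemma commute_involutionProj_right {A B : R} (h : Commute A B) (ε : 𝕜) :
    Commute A (involutionProj ε B) :=
  ((Commute.one_right A).add_right (h.smul_right ε)).smul_right _

lemma commute_involutionProj {A B : R} (h : Commute A B) (ε δ : 𝕜) :
    Commute (involutionProj ε A) (involutionProj δ B) :=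
  (commute_involutionProj_right (commute_involutionProj_right h δ).symm ε).symm

lemma isIdempotentElem_involutionProj [NeZero (2 : 𝕜)] {ε : 𝕜} {A : R} (hε : ε * ε = 1)
    (hA : A * A = 1) : IsIdempotentElem (involutionProj ε A) := by
  have hεA : (ε • A) * (ε • A) = 1 := by rw [smul_mul_smul_comm, hε, hA, one_smul]
  have hsq : (1 + ε • A) * (1 + ε • A) = (2 : 𝕜) • (1 + ε • A) := by
    rw [add_mul, mul_add, mul_add, hεA, two_smul, one_mul, one_mul, mul_one, add_comm (ε • A)]
  have h2 : (2 : 𝕜) ≠ 0 := NeZero.ne 2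
  rw [IsIdempotentElem, involutionProj, smul_mul_smul_comm, hsq, smul_smul]
  congr 1
  field_simp

lemma isSelfAdjoint_involutionProj [StarRing 𝕜] [StarRing R] [StarModule 𝕜 R] {ε : 𝕜} {A : R}
    (hε : IsSelfAdjoint ε) (hA : IsSelfAdjoint A) : IsSelfAdjoint (involutionProj ε A) := by
  have hhalf : IsSelfAdjoint (1 / 2 : 𝕜) := (IsSelfAdjoint.one 𝕜).div (IsSelfAdjoint.ofNat 2)
  exact hhalf.smul ((IsSelfAdjoint.one R).add (hε.smul hA))

end Projections

section Trace

variable {n ι 𝕜 : Type*} [Fintype n] [Field 𝕜]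

lemma rank_eq_trace_of_isIdempotentElem {Q : Matrix n n 𝕜} (hQ : IsIdempotentElem Q) :
    (Q.rank : 𝕜) = Q.trace := by
  classical
  have hproj := LinearMap.IsIdempotentElem.isProj_range _ (hQ.map (Matrix.toLinAlgEquiv' (R := 𝕜)))
  rw [← Matrix.trace_toLin'_eq]
  exact hproj.trace.symm

variable [DecidableEq n]

lemma trace_eq_zero_of_anticommute [NeZero (2 : 𝕜)] {U A : Matrix n n 𝕜} (hU : IsUnit U)
    (h : U * A = -(A * U)) : A.trace = 0 := by
  obtain ⟨U, rfl⟩ := hU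
  have hconj : (-A).trace = A.trace := by
    rw [← Matrix.trace_units_conj U A, h, neg_mul, mul_assoc, Units.mul_inv, mul_one]
  rw [Matrix.trace_neg, neg_eq_iff_add_eq_zero, ← two_mul] at hconj
  exact (mul_eq_zero.mp hconj).resolve_left (NeZero.ne 2)

lemma two_pow_mul_trace_list_prod_involutionProj [NeZero (2 : 𝕜)] {A : ι → Matrix n n 𝕜}
    (hsep : ∀ j, ∃ U, IsUnit U ∧ U * A j = -(A j * U) ∧ ∀ i ≠ j, Commute U (A i))
    (ε : ι → 𝕜) {l : List ι} (hl : l.Nodup) :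
    2 ^ l.length * (l.map fun j => involutionProj (ε j) (A j)).prod.trace =
      (Fintype.card n : 𝕜) := by
  induction l with
  | nil => simp
  | cons j l ih =>
    obtain ⟨hj, hl⟩ := List.nodup_cons.mp hl
    set Q := (l.map fun i => involutionProj (ε i) (A i)).prod
    obtain ⟨U, hU, hUj, hUi⟩ := hsep j
    have hUQ : Commute U Q := by
      refine Commute.list_prod_right _ _ (List.forall_mem_map.mpr fun i hi => ?_)
      exact commute_involutionProj_right (hUi i (ne_of_mem_of_not_mem hi hj)) (ε i)
    have htrace : (A j * Q).trace = 0 := by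
      refine trace_eq_zero_of_anticommute hU ?_
      rw [← mul_assoc, hUj, neg_mul, mul_assoc, hUQ.eq, mul_assoc]
    have h2 : (2 : 𝕜) ≠ 0 := NeZero.ne 2
    calc 2 ^ (l.length + 1) * (involutionProj (ε j) (A j) * Q).trace
        = 2 ^ (l.length + 1) * (1 / 2 * (Q.trace + ε j * (A j * Q).trace)) := by
          simp only [involutionProj, smul_mul_assoc, add_mul, one_mul, Matrix.trace_smul,
            Matrix.trace_add, smul_eq_mul]
      _ = 2 ^ l.length * Q.trace := by rw [htrace, pow_succ]; field_simp; ring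
      _ = Fintype.card n := ih hl

end Trace

section PiKronecker

variable {κ n R : Type*} [Fintype κ] [CommSemiring R]

/-- The Kronecker product of a finite family of square matrices, indexed by functions `κ → n`. -/
def piKronecker (A : κ → Matrix n n R) : Matrix (κ → n) (κ → n) R :=
  fun x y => ∏ j, A j (x j) (y j)

lemma piKronecker_mul [DecidableEq κ] [Fintype n] (A B : κ → Matrix n n R) :
    piKronecker A * piKronecker B = piKronecker fun j => A j * B j := by
  ext x z
  simp only [Matrix.mul_apply, piKronecker, Finset.prod_univ_sum, Fintype.piFinset_univ,
    Finset.prod_mul_distrib]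

lemma piKronecker_one [DecidableEq n] :
    piKronecker (fun _ : κ => (1 : Matrix n n R)) = 1 := by
  ext x y
  simp only [piKronecker, Matrix.one_apply, Finset.prod_ite_zero, Finset.mem_univ, true_imp_iff,
    Finset.prod_const_one, funext_iff]

lemma piKronecker_smul (c : κ → R) (A : κ → Matrix n n R) :
    (piKronecker fun j => c j • A j) = (∏ j, c j) • piKronecker A := by
  ext x y
  simp only [piKronecker, Matrix.smul_apply, smul_eq_mul, Finset.prod_mul_distrib]

lemma conjTranspose_piKronecker [StarRing R] (A : κ → Matrix n n R) :
    (piKronecker A).conjTranspose = piKronecker fun j => (A j).conjTranspose := by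
  ext x y
  simp only [piKronecker, Matrix.conjTranspose_apply, star_prod]

end PiKronecker

section Symplectic

variable {κ : Type*} [Fintype κ]

/-- The symplectic inner product `(a, b) ⊙ (a', b') = a · b' + a' · b`. -/
def symplecticProd (v w : (κ → ZMod 2) × (κ → ZMod 2)) : ZMod 2 :=
  ∑ t, (v.1 t * w.2 t + w.1 t * v.2 t)

lemma exists_symplecticProd_eq (f : Module.Dual (ZMod 2) ((κ → ZMod 2) × (κ → ZMod 2))) :
    ∃ w, ∀ v, symplecticProd w v = f v := by
  classical
  obtain ⟨b, hb⟩ := (dotProductEquiv (ZMod 2) κ).surjective (f ∘ₗ .inl _ _ _)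
  obtain ⟨a, ha⟩ := (dotProductEquiv (ZMod 2) κ).surjective (f ∘ₗ .inr _ _ _)
  refine ⟨(a, b), fun v => ?_⟩
  calc symplecticProd (a, b) v = b ⬝ᵥ v.1 + a ⬝ᵥ v.2 := by
        simp only [symplecticProd, dotProduct, Finset.sum_add_distrib, add_comm, mul_comm]
    _ = f (v.1, 0) + f (0, v.2) := congr($hb v.1 + $ha v.2)
    _ = f v := by rw [← map_add, Prod.mk_add_mk, add_zero, zero_add]

lemma exists_dual_eq_one_and_eq_zero {K V ι : Type*} [Field K] [AddCommGroup V] [Module K V]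
    {y : ι → V} (hy : LinearIndependent K y) (j : ι) :
    ∃ f : Module.Dual K V, f (y j) = 1 ∧ ∀ i ≠ j, f (y i) = 0 := by
  obtain ⟨f, hspan, hfj⟩ := LinearMap.exists_extend_of_notMem
    (0 : Submodule.span K (y '' (Set.univ \ {j})) →ₗ[K] K)
    (linearIndependent_iff_notMem_span.mp hy j) 1
  refine ⟨f, hfj, fun i hij => ?_⟩
  exact congr($hspan ⟨y i, Submodule.subset_span ⟨i, ⟨trivial, hij⟩, rfl⟩⟩)

lemma exists_symplecticProd_eq_one_and_eq_zero {ι : Type*}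
    {y : ι → (κ → ZMod 2) × (κ → ZMod 2)} (hy : LinearIndependent (ZMod 2) y) (j : ι) :
    ∃ w, symplecticProd w (y j) = 1 ∧ ∀ i ≠ j, symplecticProd w (y i) = 0 := by
  obtain ⟨f, hfj, hfi⟩ := exists_dual_eq_one_and_eq_zero hy j
  obtain ⟨w, hw⟩ := exists_symplecticProd_eq f
  exact ⟨w, (hw _).trans hfj, fun i hij => (hw _).trans (hfi i hij)⟩

end Symplectic

section Pauli

lemma addChar_sum_eq_prod {ι A M : Type*} [AddCommMonoid A] [CommMonoid M] (ψ : AddChar A M)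
    (s : Finset ι) (f : ι → A) : ψ (∑ i ∈ s, f i) = ∏ i ∈ s, ψ (f i) :=
  map_prod ψ.toMonoidHom (fun i => Multiplicative.ofAdd (f i)) s

/-- The character `a ↦ (-1) ^ a` of `F_2`. -/
noncomputable def signChar : AddChar (ZMod 2) ℂ :=
  AddChar.zmodChar 2 (ζ := -1) neg_one_sq

lemma signChar_one : signChar 1 = -1 := by
  simp [signChar, AddChar.zmodChar_apply, ZMod.val_one]

lemma eq_zero_or_eq_one_of_zmod_two (a : ZMod 2) : a = 0 ∨ a = 1 := by
  decide +revert

lemma conjTranspose_pauliMat (a b : ZMod 2) : (pauliMat a b).conjTranspose = pauliMat a b := by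
  rcases eq_zero_or_eq_one_of_zmod_two a with rfl | rfl <;>
    rcases eq_zero_or_eq_one_of_zmod_two b with rfl | rfl <;>
    ext i j <;> fin_cases i <;> fin_cases j <;> simp [pauliMat]

lemma pauliMat_mul_self (a b : ZMod 2) : pauliMat a b * pauliMat a b = 1 := by
  rcases eq_zero_or_eq_one_of_zmod_two a with rfl | rfl <;>
    rcases eq_zero_or_eq_one_of_zmod_two b with rfl | rfl <;>
    simp [pauliMat, Matrix.one_fin_two]

lemma pauliMat_mul_comm (a b a' b' : ZMod 2) :
    pauliMat a b * pauliMat a' b' =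
      signChar (a * b' + a' * b) • (pauliMat a' b' * pauliMat a b) := by
  have htwo : (1 + 1 : ZMod 2) = 0 := by decide
  rcases eq_zero_or_eq_one_of_zmod_two a with rfl | rfl <;>
    rcases eq_zero_or_eq_one_of_zmod_two b with rfl | rfl <;>
    rcases eq_zero_or_eq_one_of_zmod_two a' with rfl | rfl <;>
    rcases eq_zero_or_eq_one_of_zmod_two b' with rfl | rfl <;>
    simp [pauliMat, signChar_one, htwo]

end Pauli

section HeisenbergWeyl

variable {m : ℕ}

lemma HW_eq_piKronecker (a b : Fin m → ZMod 2) :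
    HW a b = piKronecker fun j => pauliMat (a j) (b j) :=
  rfl

lemma isSelfAdjoint_HW (a b : Fin m → ZMod 2) : IsSelfAdjoint (HW a b) := by
  rw [isSelfAdjoint_iff, Matrix.star_eq_conjTranspose, HW_eq_piKronecker,
    conjTranspose_piKronecker]
  simp only [conjTranspose_pauliMat]

lemma HW_mul_self (a b : Fin m → ZMod 2) : HW a b * HW a b = 1 := by
  simp only [HW_eq_piKronecker, piKronecker_mul, pauliMat_mul_self, piKronecker_one]

lemma HW_mul_comm (v w : (Fin m → ZMod 2) × (Fin m → ZMod 2)) :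
    HW v.1 v.2 * HW w.1 w.2 = signChar (symplecticProd v w) • (HW w.1 w.2 * HW v.1 v.2) := by
  simp only [HW_eq_piKronecker, piKronecker_mul, symplecticProd, addChar_sum_eq_prod,
    ← piKronecker_smul, ← pauliMat_mul_comm]

lemma commute_HW {v w : (Fin m → ZMod 2) × (Fin m → ZMod 2)} (h : symplecticProd v w = 0) :
    Commute (HW v.1 v.2) (HW w.1 w.2) := by
  rw [commute_iff_eq, HW_mul_comm, h, AddChar.map_zero_eq_one, one_smul]

lemma HW_mul_eq_neg_mul {v w : (Fin m → ZMod 2) × (Fin m → ZMod 2)}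
    (h : symplecticProd v w = 1) : HW v.1 v.2 * HW w.1 w.2 = -(HW w.1 w.2 * HW v.1 v.2) := by
  rw [HW_mul_comm, h, signChar_one, neg_one_smul]

lemma isStarProjection_involutionProj_HW (a b : Fin m → ZMod 2) {ε : ℂ} (hε : ε = 1 ∨ ε = -1) :
    IsStarProjection (involutionProj ε (HW a b)) where
  isIdempotentElem := isIdempotentElem_involutionProj (mul_self_eq_one_iff.mpr hε) (HW_mul_self a b)
  isSelfAdjoint := by
    have hstar : IsSelfAdjoint ε := by rcases hε with rfl | rfl <;> simp [isSelfAdjoint_iff]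
    exact isSelfAdjoint_involutionProj hstar (isSelfAdjoint_HW a b)

variable {ι : Type*} {y : ι → (Fin m → ZMod 2) × (Fin m → ZMod 2)}

lemma two_pow_mul_trace_list_prod_involutionProj_HW (hy : LinearIndependent (ZMod 2) y)
    (ε : ι → ℂ) {l : List ι} (hl : l.Nodup) :
    2 ^ l.length * (l.map fun j => involutionProj (ε j) (HW (y j).1 (y j).2)).prod.trace =
      2 ^ m := by
  rw [two_pow_mul_trace_list_prod_involutionProj (fun j => ?_) ε hl]
  · simp
  · obtain ⟨w, hwj, hwi⟩ := exists_symplecticProd_eq_one_and_eq_zero hy j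
    exact ⟨HW w.1 w.2, .of_mul_eq_one _ (HW_mul_self _ _), HW_mul_eq_neg_mul hwj,
      fun i hij => commute_HW (hwi i hij)⟩

lemma two_pow_mul_rank_list_prod_involutionProj_HW (hy : LinearIndependent (ZMod 2) y)
    (ε : ι → ℂ) {l : List ι} (hl : l.Nodup)
    (hproj : IsIdempotentElem
      (l.map fun j => involutionProj (ε j) (HW (y j).1 (y j).2)).prod) :
    2 ^ l.length * (l.map fun j => involutionProj (ε j) (HW (y j).1 (y j).2)).prod.rank =
      2 ^ m := by
  have htrace := two_pow_mul_trace_list_prod_involutionProj_HW hy ε hl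
  rw [← rank_eq_trace_of_isIdempotentElem hproj] at htrace
  exact_mod_cast htrace

lemma rank_involutionProj_HW (hy : LinearIndependent (ZMod 2) y) (j : ι) {ε : ℂ}
    (hε : ε = 1 ∨ ε = -1) : (involutionProj ε (HW (y j).1 (y j).2)).rank = 2 ^ (m - 1) := by
  have hproj := (isStarProjection_involutionProj_HW (y j).1 (y j).2 hε).isIdempotentElem
  have hrank := two_pow_mul_rank_list_prod_involutionProj_HW hy (fun _ => ε)
    (List.nodup_singleton j) (by simpa using hproj)
  simp only [List.length_singleton, List.map_singleton, List.prod_singleton, pow_one] at hrank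
  cases m with
  | zero => omega
  | succ k => rw [pow_succ'] at hrank; exact Nat.eq_of_mul_eq_mul_left two_pos hrank

lemma isStarProjection_list_prod_involutionProj_HW
    (hcomm : Pairwise fun i j => symplecticProd (y i) (y j) = 0) {ε : ι → ℂ}
    (hε : ∀ j, ε j = 1 ∨ ε j = -1) {l : List ι} (hl : l.Nodup) :
    IsStarProjection (l.map fun j => involutionProj (ε j) (HW (y j).1 (y j).2)).prod :=
  isStarProjection_list_prod
    (List.forall_mem_map.mpr fun j _ => isStarProjection_involutionProj_HW _ _ (hε j))
    (List.pairwise_map.mpr <| hl.imp fun hij =>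
      commute_involutionProj (commute_HW (hcomm hij)) _ _)

end HeisenbergWeyl

theorem commuting_projections_from_isotropic_rows_general
    {ι : Type*} {m : ℕ} (y : ι → (Fin m → ZMod 2) × (Fin m → ZMod 2))
    (hind : LinearIndependent (ZMod 2) y)
    (hsymp : ∀ i j, i ≠ j →
      (∑ t, ((y i).1 t * (y j).2 t + (y j).1 t * (y i).2 t)) = 0)
    (P : ι → Matrix (Fin m → Fin 2) (Fin m → Fin 2) ℂ)
    (hP : ∀ j, P j = (1 / 2 : ℂ) • (1 + HW (y j).1 (y j).2)) :
    (∀ i j, P i * P j = P j * P i) ∧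
    (∀ j, (P j).IsHermitian ∧ P j * P j = P j ∧ (P j).rank = 2 ^ (m - 1)) ∧
    (∀ ε : ι → ℂ, (∀ j, ε j = 1 ∨ ε j = -1) → ∀ l : List ι, l.Nodup →
      ∀ Q : Matrix (Fin m → Fin 2) (Fin m → Fin 2) ℂ,
        Q = (l.map fun j => (1 / 2 : ℂ) • (1 + ε j • HW (y j).1 (y j).2)).prod →
        Q.IsHermitian ∧ Q * Q = Q ∧ 2 ^ l.length * Q.rank = 2 ^ m) := by
  obtain rfl : P = fun j => involutionProj (1 : ℂ) (HW (y j).1 (y j).2) :=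
    funext fun j => by rw [hP, involutionProj, one_smul]
  refine ⟨fun i j => ?_, fun j => ?_, ?_⟩
  · obtain rfl | hij := eq_or_ne i j
    · rfl
    · exact commute_involutionProj (commute_HW (hsymp i j hij)) 1 1
  · have hproj := isStarProjection_involutionProj_HW (y j).1 (y j).2 (.inl rfl)
    exact ⟨hproj.isSelfAdjoint, hproj.isIdempotentElem, rank_involutionProj_HW hind j (.inl rfl)⟩
  · rintro ε hε l hl Q rfl
    have hproj := isStarProjection_list_prod_involutionProj_HW (fun i j => hsymp i j) hε hl
    exact ⟨hproj.isSelfAdjoint, hproj.isIdempotentElem,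
      two_pow_mul_rank_list_prod_involutionProj_HW hind ε hl hproj.isIdempotentElem⟩

/-- given `y_1, …, y_m ∈ F_2^{2m}` (each written `y_j = (a_j, b_j)`)
linearly independent over `F_2` with pairwise symplectic inner product zero, the
matrices `P_j = (1/2)(I + E_{y_j})` are pairwise commuting orthogonal projections
of rank `2^(m−1)`, and for every sign pattern `ε ∈ {±1}^m` the product
`Π_j (1/2)(I + ε_j E_{y_j})` is an orthogonal projection of rank `1`. -/
theorem commuting_projections_from_isotropic_rows
    (m : ℕ) (y : Fin m → (Fin m → ZMod 2) × (Fin m → ZMod 2))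
    (hind : LinearIndependent (ZMod 2) y)
    (hsymp : ∀ i j, i ≠ j →
      (∑ t, ((y i).1 t * (y j).2 t + (y j).1 t * (y i).2 t)) = 0)
    (P : Fin m → Matrix (Fin m → Fin 2) (Fin m → Fin 2) ℂ)
    (hP : ∀ j, P j = (1 / 2 : ℂ) • (1 + HW (y j).1 (y j).2)) :
    (∀ i j, P i * P j = P j * P i) ∧
    (∀ j, (P j).IsHermitian ∧ P j * P j = P j ∧ (P j).rank = 2 ^ (m - 1)) ∧
    (∀ ε : Fin m → ℂ, (∀ j, ε j = 1 ∨ ε j = -1) →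
      ∀ Q : Matrix (Fin m → Fin 2) (Fin m → Fin 2) ℂ,
        Q = (((List.finRange m).map fun j =>
          (1 / 2 : ℂ) • (1 + ε j • HW (y j).1 (y j).2))).prod →
        Q.IsHermitian ∧ Q * Q = Q ∧ Q.rank = 1) := by
  obtain ⟨hcomm, hP, hQ⟩ := commuting_projections_from_isotropic_rows_general y hind hsymp P hP
  exact ⟨hcomm, hP, fun ε hε Q h => by simpa using hQ ε hε _ (List.nodup_finRange m) Q h⟩
end

section
/- Let A be a k × 2k matrix over F_2. Then there exists a nonzero vector w ∈ F_2^{2k} with symplectic weight at most ⌈(k+1)/2⌉ such that A·w = 0. (Consequently, the hypotheses of the main construction, which require A·w ∈ Cset_f for all nonzero w of symplectic weight ≤ d−1 and a nonzero Boolean function f, can only be satisfied when d ≤ ⌈(k+3)/2⌉, since the zero vector is never in the complementary set of a nonzero Boolean function.) -/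
/-- The symplectic weight of `w = (a, b) ∈ F_2^k × F_2^k`, encoded as
`w : Fin k ⊕ Fin k → ZMod 2`: the number of indices `i` with `a_i ≠ 0` or `b_i ≠ 0`. -/
def sympWt {k : ℕ} (w : Fin k ⊕ Fin k → ZMod 2) : ℕ :=
  (Finset.univ.filter fun i : Fin k => w (Sum.inl i) ≠ 0 ∨ w (Sum.inr i) ≠ 0).card

/-! A vector `(a, b)` whose two halves are supported in a set `s` of indices has symplectic weight
at most `#s`, and such vectors form a free module of rank `2 * #s`. As soon as `2 * #s` exceeds the
rank of the target, a linear map kills a nonzero vector among them. -/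

open Module

section Kernel

variable {R M : Type*} [Ring R] [StrongRankCondition R] [AddCommGroup M] [Module R M]
  [Module.Finite R M]

theorem exists_ne_zero_map_eq_zero_of_finrank_lt {N : Type*} [AddCommGroup N] [Module R N]
    (f : N →ₗ[R] M) (h : finrank R M < finrank R N) : ∃ x ≠ 0, f x = 0 := by
  by_contra! hf
  have f_injective : Function.Injective f :=
    (injective_iff_map_eq_zero f).2 fun x => not_imp_not.1 (hf x)
  exact h.not_ge (LinearMap.finrank_le_finrank_of_injective f_injective)

theorem exists_ne_zero_support_subset_map_eq_zero {n : Type*} (f : (n → R) →ₗ[R] M)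
    (s : Finset n) (h : finrank R M < s.card) :
    ∃ w ≠ 0, Function.support w ⊆ s ∧ f w = 0 := by
  let extendByZero := Function.ExtendByZero.linearMap R (Subtype.val : s → n)
  obtain ⟨v, hv, hfv⟩ := exists_ne_zero_map_eq_zero_of_finrank_lt (f ∘ₗ extendByZero)
    (by rwa [finrank_fintype_fun_eq_card, Fintype.card_coe])
  refine ⟨extendByZero v, fun hw => hv ?_, ?_, hfv⟩
  · exact Function.extend_injective Subtype.val_injective (0 : n → R)
      (hw.trans (Function.extend_zero _).symm)
  · intro j hj
    by_contra hjs
    exact hj (Function.extend_apply' v (0 : n → R) j fun ⟨i, hi⟩ => hjs (hi ▸ i.2))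

end Kernel

section SymplecticWeight

variable {ι R : Type*} [Fintype ι] [DecidableEq R]

/-- The symplectic weight of a vector `(a, b)` over any coefficients, encoded as a function on
`ι ⊕ ι`: the number of indices at which `a` or `b` is nonzero. Over `ZMod 2` and for `ι = Fin k`
it is `sympWt`. -/
def symplecticWeight [Zero R] (w : ι ⊕ ι → R) : ℕ :=
  (Finset.univ.filter fun i : ι => w (Sum.inl i) ≠ 0 ∨ w (Sum.inr i) ≠ 0).card

theorem symplecticWeight_le_card [Zero R] {w : ι ⊕ ι → R} {s : Finset ι}
    (h : Function.support w ⊆ s.disjSum s) : symplecticWeight w ≤ s.card := by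
  refine Finset.card_le_card fun i hi => ?_
  rcases (Finset.mem_filter.1 hi).2 with ha | hb
  · exact Finset.inl_mem_disjSum.1 (h ha)
  · exact Finset.inr_mem_disjSum.1 (h hb)

theorem exists_low_sympWt_kernel_vector_general {M : Type*} [Ring R] [StrongRankCondition R]
    [AddCommGroup M] [Module R M] [Module.Finite R M] (f : (ι ⊕ ι → R) →ₗ[R] M)
    (h : finrank R M < 2 * Fintype.card ι) :
    ∃ w ≠ 0, symplecticWeight w ≤ finrank R M / 2 + 1 ∧ f w = 0 := by
  obtain ⟨s, -, hs⟩ : ∃ s ⊆ (Finset.univ : Finset ι), s.card = finrank R M / 2 + 1 :=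
    Finset.exists_subset_card_eq (by rw [Finset.card_univ]; lia)
  obtain ⟨w, hw, hws, hfw⟩ := exists_ne_zero_support_subset_map_eq_zero f (s.disjSum s)
    (by rw [Finset.card_disjSum]; lia)
  exact ⟨w, hw, hs ▸ symplecticWeight_le_card hws, hfw⟩

end SymplecticWeight

/-- for any `k × 2k` matrix `A` over `F_2` (with `k ≥ 1`) there is a
nonzero `w ∈ F_2^{2k}` of symplectic weight at most `⌈(k+1)/2⌉` with `A·w = 0`. -/
theorem exists_low_sympWt_kernel_vector
    (k : ℕ) (hk : 1 ≤ k) (A : Matrix (Fin k) (Fin k ⊕ Fin k) (ZMod 2)) :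
    ∃ w : Fin k ⊕ Fin k → ZMod 2,
      w ≠ 0 ∧ sympWt w ≤ (k + 2) / 2 ∧ A.mulVec w = 0 := by
  obtain ⟨w, hw, hwt, hAw⟩ := exists_low_sympWt_kernel_vector_general A.mulVecLin
    (by rw [finrank_fin_fun, Fintype.card_fin]; lia)
  rw [finrank_fin_fun, ← Nat.add_div_right k two_pos] at hwt
  exact ⟨w, hw, hwt, hAw⟩
end
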